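/- Let W_m(a,b) denote the number of walks of length m ending at the point (a,b). Then for every m ≥ 2 and all integers i, j with 1 ≤ i ≤ ⌊m/2⌋ and 1 ≤ j ≤ ⌈m/2⌉, W_m(i+1, j) = W_m(i+1, ⌈(m+2)/2⌉) · W_m(⌊(m+4)/2⌋, j); that is, each entry of the walk-count matrix equals the product of the entry in its row and the last column with the entry in its column and the last row. -/

import Mathlib

/-- One allowed step of the walk: from `(a,b)` one may move to `(b+1,i)` with `1 ≤ i ≤ a`. -/
def WalkStep (p q : ℤ × ℤ) : Prop := q.1 = p.2 + 1 ∧ 1 ≤ q.2 ∧ q.2 ≤ p.1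

/-- `l` is the list of points `p_0, …, p_m` of a walk of length `m` in `ℤ²`
starting at `(2,1)` with the allowed steps. -/
def IsWalk (m : ℕ) (l : List (ℤ × ℤ)) : Prop :=
  l.length = m + 1 ∧ l.head? = some (2, 1) ∧ l.Chain' WalkStep

/-- The number of walks of length `m`. -/
noncomputable def walkCount (m : ℕ) : ℕ :=
  Nat.card {l : List (ℤ × ℤ) // IsWalk m l}

/-- `W_m(a,b)`: the number of walks of length `m` ending at the point `(a,b)`. -/
noncomputable def walkCountEnd (m : ℕ) (a b : ℤ) : ℕ :=
  Nat.card {l : List (ℤ × ℤ) // IsWalk m l ∧ l.getLast? = some (a, b)}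

/-- Number of sequences `1 = c_0, …, c_k = c` with `1 ≤ c_{t+1} ≤ c_t + 1`. -/
noncomputable def chainN : ℕ → ℤ → ℕ
  | 0, c => if c = 1 then 1 else 0
  | k + 1, c => if 1 ≤ c then ∑ d ∈ Finset.Icc (c - 1) ((k : ℤ) + 1), chainN k d else 0

theorem chainN_big (k : ℕ) (c : ℤ) (h : (k : ℤ) + 1 < c) : chainN k c = 0 := by
  cases k with
  | zero => simp only [chainN]; rw [if_neg]; push_cast at h; omega
  | succ k =>
    simp only [chainN]
    rw [Finset.Icc_eq_empty (by push_cast at h; omega)]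
    simp

theorem chainN_top (k : ℕ) : chainN k ((k : ℤ) + 1) = 1 := by
  induction k with
  | zero => simp [chainN]
  | succ k ih =>
    simp only [chainN]
    rw [if_pos (by push_cast; omega)]
    have : ((k + 1 : ℕ) : ℤ) + 1 - 1 = (k : ℤ) + 1 := by push_cast; ring
    rw [this, Finset.Icc_self, Finset.sum_singleton, ih]

theorem chainN_sum (k : ℕ) (c M : ℤ) (hM : (k : ℤ) + 1 ≤ M) :
    ∑ d ∈ Finset.Icc (c + 1) (M + 1), chainN k (d - 1)
      = ∑ d ∈ Finset.Icc c ((k : ℤ) + 1), chainN k d := by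
  have h1 : ∑ d ∈ Finset.Icc c ((k : ℤ) + 1), chainN k d
      = ∑ d ∈ Finset.Icc c M, chainN k d := by
    apply Finset.sum_subset
    · exact Finset.Icc_subset_Icc le_rfl hM
    · intro x hx hx'
      apply chainN_big
      simp only [Finset.mem_Icc] at hx hx'
      omega
  rw [h1]
  refine Finset.sum_bij (fun d _ => d - 1) ?_ ?_ ?_ ?_
  · intro d hd; simp only [Finset.mem_Icc] at hd ⊢; omega
  · intro d _ e _ h; simpa using h
  · intro d hd
    simp only [Finset.mem_Icc] at hd
    exact ⟨d + 1, by simp only [Finset.mem_Icc]; omega, by ring⟩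
  · intro d _; rfl

/-- The finite set of walks of length `m` ending at `(a,b)`. -/
noncomputable def walkSet : ℕ → ℤ → ℤ → Finset (List (ℤ × ℤ))
  | 0, a, b => if a = 2 ∧ b = 1 then {[(2, 1)]} else ∅
  | m + 1, a, b => if 1 ≤ b then
      (Finset.Icc b ((m : ℤ) + 2)).biUnion
        (fun a' => (walkSet m a' (a - 1)).image (fun l => l ++ [(a, b)]))
      else ∅

theorem walk_succ (m : ℕ) (l : List (ℤ × ℤ)) (a b : ℤ) :
    (IsWalk (m + 1) l ∧ l.getLast? = some (a, b)) ↔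
      1 ≤ b ∧ ∃ a' l', b ≤ a' ∧ IsWalk m l' ∧ l'.getLast? = some (a', a - 1) ∧
        l = l' ++ [(a, b)] := by
  constructor
  · rintro ⟨⟨hl, hh, hc⟩, hlast⟩
    obtain ⟨l', rfl⟩ := List.getLast?_eq_some_iff.1 hlast
    have hne : l' ≠ [] := by rintro rfl; simp at hl
    have hlen : l'.length = m + 1 := by simpa using hl
    obtain ⟨c1, -, c3⟩ := List.isChain_append.1 hc
    obtain ⟨⟨x, y⟩, hp⟩ := List.getLast?_isSome.2 hne |> Option.isSome_iff_exists.1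
    have hs := c3 (x, y) (by simp [hp]) (a, b) (by simp)
    obtain ⟨s1, s2, s3⟩ := hs
    simp only at s1 s2 s3
    refine ⟨s2, x, l', s3, ⟨hlen, ?_, c1⟩, ?_, rfl⟩
    · rw [List.head?_append_of_ne_nil _ hne] at hh; exact hh
    · rw [hp, s1]; simp
  · rintro ⟨hb, a', l', hba, ⟨hl, hh, hc⟩, hlast, rfl⟩
    have hne : l' ≠ [] := by rintro rfl; simp at hl
    refine ⟨⟨by simp [hl], ?_, ?_⟩, by simp⟩
    · rw [List.head?_append_of_ne_nil _ hne]; exact hh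
    · refine List.isChain_append.2 ⟨hc, by simp, ?_⟩
      intro p hp q hq
      simp only [hlast, Option.mem_def, Option.some.injEq, List.head?_cons] at hp hq
      subst hp hq
      exact ⟨by simp, hb, hba⟩

theorem walk_zero (l : List (ℤ × ℤ)) : IsWalk 0 l ↔ l = [(2, 1)] := by
  constructor
  · rintro ⟨h1, h2, -⟩
    obtain ⟨p, rfl⟩ := List.length_eq_one_iff.1 h1
    simpa using h2
  · rintro rfl
    exact ⟨rfl, rfl, List.isChain_singleton _⟩

theorem walk_bound (m : ℕ) : ∀ (l : List (ℤ × ℤ)) (a b : ℤ),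
    IsWalk m l → l.getLast? = some (a, b) → a ≤ m + 2 ∧ b ≤ m + 2 := by
  induction m with
  | zero =>
    intro l a b h hl
    rw [walk_zero] at h
    subst h
    simp only [List.getLast?_singleton, Option.some.injEq, Prod.mk.injEq] at hl
    push_cast
    omega
  | succ m ih =>
    intro l a b h hl
    obtain ⟨hb, a', l', hba, hw, hla, rfl⟩ := (walk_succ m l a b).1 ⟨h, hl⟩
    have := ih _ _ _ hw hla
    push_cast
    omega

theorem mem_walkSet (m : ℕ) : ∀ (l : List (ℤ × ℤ)) (a b : ℤ),
    l ∈ walkSet m a b ↔ IsWalk m l ∧ l.getLast? = some (a, b) := by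
  induction m with
  | zero =>
    intro l a b
    rw [walk_zero]
    simp only [walkSet]
    constructor
    · intro h
      split_ifs at h with hab
      · simp only [Finset.mem_singleton] at h
        obtain ⟨rfl, rfl⟩ := hab
        subst h; simp
      · simp at h
    · rintro ⟨rfl, h⟩
      simp only [List.getLast?_singleton, Option.some.injEq, Prod.mk.injEq] at h
      rw [if_pos ⟨h.1.symm, h.2.symm⟩]
      simp
  | succ m ih =>
    intro l a b
    rw [walk_succ]
    simp only [walkSet]
    split_ifs with hb
    · simp only [Finset.mem_biUnion, Finset.mem_Icc, Finset.mem_image]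
      constructor
      · rintro ⟨a', ⟨h1, -⟩, l', hl', rfl⟩
        obtain ⟨hw, hla⟩ := (ih _ _ _).1 hl'
        exact ⟨hb, a', l', h1, hw, hla, rfl⟩
      · rintro ⟨-, a', l', h1, hw, hla, rfl⟩
        exact ⟨a', ⟨h1, (walk_bound m _ _ _ hw hla).1⟩, l', (ih _ _ _).2 ⟨hw, hla⟩, rfl⟩
    · simp [hb]

theorem card_walkSet (m : ℕ) : ∀ (a b : ℤ),
    (walkSet m a b).card = chainN (m / 2) (a - 1) * chainN ((m + 1) / 2) b := by
  induction m with
  | zero =>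
    intro a b
    simp only [walkSet, chainN]
    have : a - 1 = 1 ↔ a = 2 := by omega
    by_cases h1 : a = 2 <;> by_cases h2 : b = 1 <;> simp [this, h1, h2, chainN]
  | succ m ih =>
    intro a b
    have e : (m + 1 + 1) / 2 = m / 2 + 1 := by omega
    rw [e]
    simp only [walkSet, chainN]
    split_ifs with hb
    · rw [Finset.card_biUnion]
      · have : ∀ a' ∈ Finset.Icc b ((m : ℤ) + 2),
            ((walkSet m a' (a - 1)).image (fun l => l ++ [(a, b)])).card
              = chainN (m / 2) (a' - 1) * chainN ((m + 1) / 2) (a - 1) := by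
          intro a' _
          rw [Finset.card_image_of_injective _ (List.append_left_injective _), ih]
        rw [Finset.sum_congr rfl this, ← Finset.sum_mul, mul_comm]
        congr 1
        have := chainN_sum (m / 2) (b - 1) ((m : ℤ) + 1) (by omega)
        rw [← this]
        congr 2 <;> ring
      · intro x _ y _ hxy
        rw [Function.onFun, Finset.disjoint_left]
        intro l hx hy
        simp only [Finset.mem_image] at hx hy
        obtain ⟨l1, h1, rfl⟩ := hx
        obtain ⟨l2, h2, h⟩ := hy
        have h := List.append_left_injective _ h
        subst h
        have e1 := ((mem_walkSet m _ _ _).1 h1).2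
        have e2 := ((mem_walkSet m _ _ _).1 h2).2
        rw [e1] at e2
        simp only [Option.some.injEq, Prod.mk.injEq] at e2
        exact hxy e2.1
    · simp

theorem walkCountEnd_eq (m : ℕ) (a b : ℤ) :
    walkCountEnd m a b = chainN (m / 2) (a - 1) * chainN ((m + 1) / 2) b := by
  rw [← card_walkSet, walkCountEnd, ← Nat.card_eq_finsetCard]
  exact Nat.card_congr (Equiv.subtypeEquivRight fun l => (mem_walkSet m l a b).symm)

/-- Lemma: for `m ≥ 2`, each entry of the walk-count matrix is the product of the
entry in its row and the last column with the entry in its column and the last row: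
`W_m(i+1, j) = W_m(i+1, ⌈(m+2)/2⌉) · W_m(⌊(m+4)/2⌋, j)` for `1 ≤ i ≤ ⌊m/2⌋` and
`1 ≤ j ≤ ⌈m/2⌉`. -/
theorem stmt15 (m : ℕ) (hm : 2 ≤ m) (i j : ℕ)
    (hi1 : 1 ≤ i) (hi2 : i ≤ m / 2) (hj1 : 1 ≤ j) (hj2 : j ≤ (m + 1) / 2) :
    walkCountEnd m ((i : ℤ) + 1) (j : ℤ) =
      walkCountEnd m ((i : ℤ) + 1) (((m + 3) / 2 : ℕ) : ℤ) *
      walkCountEnd m (((m + 4) / 2 : ℕ) : ℤ) (j : ℤ) := by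
  have e1 : (((m + 3) / 2 : ℕ) : ℤ) = (((m + 1) / 2 : ℕ) : ℤ) + 1 := by omega
  have e2 : (((m + 4) / 2 : ℕ) : ℤ) - 1 = ((m / 2 : ℕ) : ℤ) + 1 := by omega
  simp only [walkCountEnd_eq]
  rw [e1, e2, chainN_top, chainN_top, mul_one, one_mul]
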